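/- In the differential algebra Ω, the Cartan–Maurer 1-forms w_x = x⁻¹·dx, w_y = x⁻¹·dy, w_θ = x·dθ − θ·dx satisfy the commutation rules: w_x·w_y = q w_y·w_x, w_y·w_θ = w_θ·w_y, w_θ·w_x = q² w_x·w_θ, and moreover (w_x)³ = 0 and (w_y)³ = 0. -/

import Mathlib

/-!
`Ω`: the differential algebra of the Z₃-graded quantum superspace, the unital
associative ℂ-algebra with generators `x`, `x⁻¹`, `y`, `θ`, `dx`, `dy`, `dθ`,
quotient of the free algebra by the two-sided ideal generated by the relations
`x·x⁻¹ = 1 = x⁻¹·x`;  `xy = q·yx`, `xθ = q·θx`, `yθ = q²·θy`, `y³ = 0`, `θ³ = 0`;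
`x·dx = q·dx·x`, `x·dy = q²·dy·x`, `x·dθ = q·dθ·x + (q−1)·dx·θ`, `y·dy = dy·y`,
`y·dx = q·dx·y + (1−q²)·dy·x`, `y·dθ = q·dθ·y + (1−q²)·dy·θ`, `θ·dx = q·dx·θ`,
`θ·dy = dy·θ`, `θ·dθ = q²·dθ·θ`;  `dx·dy = q²·dy·dx`, `dx·dθ = dθ·dx`,
`dy·dθ = dθ·dy`;  `(dx)³ = 0`, `(dy)³ = 0`.
-/

noncomputable section

inductive Gen : Type
  | x | xinv | y | th | dx | dy | dth

abbrev FA : Type := FreeAlgebra ℂ Gen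

def Xf : FA := FreeAlgebra.ι ℂ Gen.x
def XIf : FA := FreeAlgebra.ι ℂ Gen.xinv
def Yf : FA := FreeAlgebra.ι ℂ Gen.y
def Tf : FA := FreeAlgebra.ι ℂ Gen.th
def DXf : FA := FreeAlgebra.ι ℂ Gen.dx
def DYf : FA := FreeAlgebra.ι ℂ Gen.dy
def DTf : FA := FreeAlgebra.ι ℂ Gen.dth

/-- The defining relations of the differential algebra `Ω`. -/
inductive QRel (q : ℂ) : FA → FA → Prop
  | xxi : QRel q (Xf * XIf) 1
  | xix : QRel q (XIf * Xf) 1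
  | xy : QRel q (Xf * Yf) (q • (Yf * Xf))
  | xth : QRel q (Xf * Tf) (q • (Tf * Xf))
  | yth : QRel q (Yf * Tf) ((q ^ 2) • (Tf * Yf))
  | ycube : QRel q (Yf ^ 3) 0
  | thcube : QRel q (Tf ^ 3) 0
  | xdx : QRel q (Xf * DXf) (q • (DXf * Xf))
  | xdy : QRel q (Xf * DYf) ((q ^ 2) • (DYf * Xf))
  | xdth : QRel q (Xf * DTf) (q • (DTf * Xf) + (q - 1) • (DXf * Tf))
  | ydy : QRel q (Yf * DYf) (DYf * Yf)
  | ydx : QRel q (Yf * DXf) (q • (DXf * Yf) + (1 - q ^ 2) • (DYf * Xf))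
  | ydth : QRel q (Yf * DTf) (q • (DTf * Yf) + (1 - q ^ 2) • (DYf * Tf))
  | thdx : QRel q (Tf * DXf) (q • (DXf * Tf))
  | thdy : QRel q (Tf * DYf) (DYf * Tf)
  | thdth : QRel q (Tf * DTf) ((q ^ 2) • (DTf * Tf))
  | dxdy : QRel q (DXf * DYf) ((q ^ 2) • (DYf * DXf))
  | dxdth : QRel q (DXf * DTf) (DTf * DXf)
  | dydth : QRel q (DYf * DTf) (DTf * DYf)
  | dxcube : QRel q (DXf ^ 3) 0
  | dycube : QRel q (DYf ^ 3) 0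

/-- The differential algebra `Ω` of the Z₃-graded quantum superspace. -/
abbrev Om (q : ℂ) : Type := RingQuot (QRel q)

def Xg (q : ℂ) : Om q := RingQuot.mkAlgHom ℂ (QRel q) Xf
def XIg (q : ℂ) : Om q := RingQuot.mkAlgHom ℂ (QRel q) XIf
def Yg (q : ℂ) : Om q := RingQuot.mkAlgHom ℂ (QRel q) Yf
def Tg (q : ℂ) : Om q := RingQuot.mkAlgHom ℂ (QRel q) Tf
def DXg (q : ℂ) : Om q := RingQuot.mkAlgHom ℂ (QRel q) DXf
def DYg (q : ℂ) : Om q := RingQuot.mkAlgHom ℂ (QRel q) DYf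
def DTg (q : ℂ) : Om q := RingQuot.mkAlgHom ℂ (QRel q) DTf

/-!
The generator `dθ` does not commute with `x` up to a scalar, but `w_θ = x·dθ − θ·dx` also equals
`q·dθ·x − dx·θ`, and with the two expressions one sees that `w_θ` commutes with each of `x`, `dx` and
`dy` up to a power of `q`. The scalars by which a product commutes multiply, so the commutation rules
of `x⁻¹·dx` and `x⁻¹·dy` can be read off from those of `x⁻¹`, `dx`, `dy` and `w_θ`. For arbitrary `q`
this gives `w_θ·w_y = q³·w_y·w_θ`.
-/

section QCommutation

variable {R A : Type*} [CommSemiring R] [Semiring A] [Algebra R A] {a a' b b' : A} {c d : R}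

/-- `a` commutes with `b` up to the scalar `c`: `a * b = c • (b * a)`. The scalar is attached to the
product in the opposite order, so exchanging `a` and `b` inverts it. -/
def QCommute (c : R) (a b : A) : Prop :=
  a * b = c • (b * a)

namespace QCommute

theorem of_commute (h : Commute a b) : QCommute (1 : R) a b :=
  h.eq.trans (one_smul R _).symm

theorem smul_left (d : R) (h : QCommute c a b) : QCommute c (d • a) b := by
  rw [QCommute, smul_mul_assoc, h, mul_smul_comm, smul_comm]

theorem sub_left {A : Type*} [Ring A] [Algebra R A] {a a' b : A} (h : QCommute c a b)
    (h' : QCommute c a' b) : QCommute c (a - a') b := by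
  rw [QCommute, sub_mul, h, h', mul_sub, smul_sub]

theorem mul_left (h : QCommute c a b) (h' : QCommute d a' b) : QCommute (c * d) (a * a') b :=
  calc a * a' * b
    _ = d • (a * b * a') := by rw [mul_assoc, h', mul_smul_comm, mul_assoc]
    _ = (c * d) • (b * (a * a')) := by rw [h, smul_mul_assoc, smul_smul, mul_comm d, mul_assoc]

theorem mul_right (h : QCommute c a b) (h' : QCommute d a b') : QCommute (c * d) a (b * b') :=
  calc a * (b * b')
    _ = c • (b * (a * b')) := by rw [← mul_assoc, h, smul_mul_assoc, mul_assoc]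
    _ = (c * d) • (b * b' * a) := by rw [h', mul_smul_comm, smul_smul, mul_assoc]

theorem units_inv_right {x : Aˣ} (h : QCommute c (x : A) a) : QCommute c a (↑x⁻¹ : A) := by
  rw [QCommute, Units.mul_inv_eq_iff_eq_mul, smul_mul_assoc, mul_assoc, ← mul_smul_comm, ← h,
    Units.inv_mul_cancel_left]

theorem pow_left (h : QCommute c a b) (n : ℕ) : QCommute (c ^ n) (a ^ n) b := by
  induction n with
  | zero => simpa only [pow_zero] using of_commute (R := R) (Commute.one_left b)
  | succ n ih => simpa only [pow_succ] using ih.mul_left h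

theorem mul_pow (h : QCommute c b a) (n : ℕ) :
    (a * b) ^ n = c ^ n.choose 2 • (a ^ n * b ^ n) := by
  induction n with
  | zero => simp
  | succ n ih =>
    calc (a * b) ^ (n + 1)
      _ = c ^ n.choose 2 • (a ^ n * (b ^ n * a) * b) := by
        rw [pow_succ, ih, smul_mul_assoc]; simp only [mul_assoc]
      _ = (c ^ n.choose 2 * c ^ n) • (a ^ n * (a * b ^ n) * b) := by
        rw [h.pow_left n, mul_smul_comm, smul_mul_assoc, smul_smul]
      _ = c ^ (n + 1).choose 2 • (a ^ (n + 1) * b ^ (n + 1)) := by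
        rw [← pow_add, add_comm, Nat.choose_succ_succ', Nat.choose_one_right]
        simp only [pow_succ, mul_assoc]

theorem mul_pow_eq_zero (h : QCommute c b a) {n : ℕ} (hb : b ^ n = 0) : (a * b) ^ n = 0 := by
  rw [h.mul_pow, hb, mul_zero, smul_zero]

theorem mul_left_mul_left {u : A} (ha : QCommute c a u) (hb : QCommute d b u)
    (hab : QCommute d a b) : QCommute c (u * a) (u * b) :=
  calc u * a * (u * b)
    _ = c • (u * u * (a * b)) := by
      rw [mul_assoc, ← mul_assoc a, ha, smul_mul_assoc, mul_smul_comm]; simp only [mul_assoc]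
    _ = c • (u * (d • (u * b)) * a) := by
      rw [hab]; simp only [mul_smul_comm, smul_mul_assoc, mul_assoc]
    _ = c • (u * b * (u * a)) := by rw [← hb]; simp only [mul_assoc]

end QCommute

end QCommutation

section SuperspaceRelations

variable {q c : ℂ} {a b : FA}

theorem qCommute_of_qRel (h : QRel q (a * b) (c • (b * a))) :
    QCommute c (RingQuot.mkAlgHom ℂ (QRel q) a) (RingQuot.mkAlgHom ℂ (QRel q) b) := by
  simpa only [QCommute, map_mul, map_smul] using RingQuot.mkAlgHom_rel ℂ h

theorem commute_of_qRel (h : QRel q (a * b) (b * a)) :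
    Commute (RingQuot.mkAlgHom ℂ (QRel q) a) (RingQuot.mkAlgHom ℂ (QRel q) b) := by
  simpa only [commute_iff_eq, map_mul] using RingQuot.mkAlgHom_rel ℂ h

theorem mkAlgHom_pow_eq_zero_of_qRel {n : ℕ} (h : QRel q (a ^ n) 0) :
    RingQuot.mkAlgHom ℂ (QRel q) a ^ n = 0 := by
  simpa only [map_pow, map_zero] using RingQuot.mkAlgHom_rel ℂ h

variable (q)

/-- The coordinate `x` as a unit of `Ω`, with inverse the generator `x⁻¹`. -/
def xUnit : (Om q)ˣ where
  val := Xg q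
  inv := XIg q
  val_inv := by
    simpa only [Xg, XIg, map_mul, map_one] using RingQuot.mkAlgHom_rel ℂ (QRel.xxi (q := q))
  inv_val := by
    simpa only [Xg, XIg, map_mul, map_one] using RingQuot.mkAlgHom_rel ℂ (QRel.xix (q := q))

theorem qCommute_Xg_Tg : QCommute q (Xg q) (Tg q) :=
  qCommute_of_qRel .xth

theorem qCommute_Xg_DXg : QCommute q (Xg q) (DXg q) :=
  qCommute_of_qRel .xdx

theorem qCommute_Xg_DYg : QCommute (q ^ 2) (Xg q) (DYg q) :=
  qCommute_of_qRel .xdy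

theorem qCommute_Tg_DXg : QCommute q (Tg q) (DXg q) :=
  qCommute_of_qRel .thdx

theorem qCommute_DXg_DYg : QCommute (q ^ 2) (DXg q) (DYg q) :=
  qCommute_of_qRel .dxdy

theorem Xg_mul_DTg :
    Xg q * DTg q = q • (DTg q * Xg q) + (q - 1) • (DXg q * Tg q) := by
  simpa only [Xg, Tg, DXg, DTg, map_mul, map_add, map_smul] using
    RingQuot.mkAlgHom_rel ℂ (QRel.xdth (q := q))

theorem qCommute_DXg_XIg : QCommute q (DXg q) (XIg q) :=
  QCommute.units_inv_right (x := xUnit q) (qCommute_Xg_DXg q)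

theorem qCommute_DYg_XIg : QCommute (q ^ 2) (DYg q) (XIg q) :=
  QCommute.units_inv_right (x := xUnit q) (qCommute_Xg_DYg q)

end SuperspaceRelations

section ThetaForm

variable (q : ℂ)

/-- The Cartan–Maurer form `w_θ = x·dθ − θ·dx`. -/
def thetaForm : Om q :=
  Xg q * DTg q - Tg q * DXg q

theorem thetaForm_eq : thetaForm q = q • (DTg q * Xg q) - DXg q * Tg q := by
  rw [thetaForm, Xg_mul_DTg, qCommute_Tg_DXg]
  module

theorem qCommute_Xg_thetaForm : QCommute q (Xg q) (thetaForm q) := by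
  have hdxt : QCommute (q * q) (Xg q) (DXg q * Tg q) :=
    (qCommute_Xg_DXg q).mul_right (qCommute_Xg_Tg q)
  calc Xg q * thetaForm q
    _ = q • (Xg q * DTg q * Xg q) - Xg q * (DXg q * Tg q) := by
      rw [thetaForm_eq, mul_sub, mul_smul_comm, mul_assoc]
    _ = q • (Xg q * DTg q * Xg q) - q • (Tg q * DXg q * Xg q) := by
      rw [hdxt, qCommute_Tg_DXg, smul_mul_assoc, smul_smul]
    _ = q • (thetaForm q * Xg q) := by rw [thetaForm, sub_mul, smul_sub]

theorem qCommute_thetaForm_XIg : QCommute q (thetaForm q) (XIg q) :=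
  QCommute.units_inv_right (x := xUnit q) (qCommute_Xg_thetaForm q)

theorem qCommute_thetaForm_DXg : QCommute q (thetaForm q) (DXg q) := by
  have hdtx : QCommute (1 * q) (DTg q * Xg q) (DXg q) :=
    (QCommute.of_commute (commute_of_qRel .dxdth).symm).mul_left (qCommute_Xg_DXg q)
  have hdxt : QCommute (1 * q) (DXg q * Tg q) (DXg q) :=
    (QCommute.of_commute (Commute.refl _)).mul_left (qCommute_Tg_DXg q)
  rw [one_mul] at hdtx hdxt
  rw [thetaForm_eq]
  exact (hdtx.smul_left q).sub_left hdxt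

theorem qCommute_thetaForm_DYg : QCommute (q ^ 2) (thetaForm q) (DYg q) := by
  have hdtx : QCommute (1 * q ^ 2) (DTg q * Xg q) (DYg q) :=
    (QCommute.of_commute (commute_of_qRel .dydth).symm).mul_left (qCommute_Xg_DYg q)
  have hdxt : QCommute (q ^ 2 * 1) (DXg q * Tg q) (DYg q) :=
    (qCommute_DXg_DYg q).mul_left (QCommute.of_commute (commute_of_qRel .thdy))
  rw [one_mul] at hdtx
  rw [mul_one] at hdxt
  rw [thetaForm_eq]
  exact (hdtx.smul_left q).sub_left hdxt

end ThetaForm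

theorem cartan_maurer_form_relations_general (q : ℂ) (wx wy wth : Om q)
    (hwx : wx = XIg q * DXg q)
    (hwy : wy = XIg q * DYg q)
    (hwth : wth = Xg q * DTg q - Tg q * DXg q) :
    wx * wy = q • (wy * wx) ∧
    wth * wy = (q ^ 3) • (wy * wth) ∧
    wth * wx = (q ^ 2) • (wx * wth) ∧
    wx ^ 3 = 0 ∧
    wy ^ 3 = 0 := by
  subst hwx hwy hwth
  have hthx := (qCommute_thetaForm_XIg q).mul_right (qCommute_thetaForm_DXg q)
  have hthy := (qCommute_thetaForm_XIg q).mul_right (qCommute_thetaForm_DYg q)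
  rw [← sq] at hthx
  rw [← pow_succ'] at hthy
  exact ⟨(qCommute_DXg_XIg q).mul_left_mul_left (qCommute_DYg_XIg q) (qCommute_DXg_DYg q),
    hthy, hthx,
    (qCommute_DXg_XIg q).mul_pow_eq_zero (mkAlgHom_pow_eq_zero_of_qRel .dxcube),
    (qCommute_DYg_XIg q).mul_pow_eq_zero (mkAlgHom_pow_eq_zero_of_qRel .dycube)⟩

/-- The Cartan–Maurer 1-forms `w_x = x⁻¹·dx`, `w_y = x⁻¹·dy`,
`w_θ = x·dθ − θ·dx` satisfy `w_x·w_y = q·w_y·w_x`, `w_y·w_θ = w_θ·w_y`,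
`w_θ·w_x = q²·w_x·w_θ`, and `(w_x)³ = 0`, `(w_y)³ = 0`. -/
theorem cartan_maurer_form_relations (q : ℂ) (hq3 : q ^ 3 = 1) (hq1 : q ≠ 1)
    (wx wy wth : Om q)
    (hwx : wx = XIg q * DXg q)
    (hwy : wy = XIg q * DYg q)
    (hwth : wth = Xg q * DTg q - Tg q * DXg q) :
    wx * wy = q • (wy * wx) ∧
    wy * wth = wth * wy ∧
    wth * wx = (q ^ 2) • (wx * wth) ∧
    wx ^ 3 = 0 ∧
    wy ^ 3 = 0 := by
  obtain ⟨hxy, hthy, hrest⟩ := cartan_maurer_form_relations_general q wx wy wth hwx hwy hwth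
  exact ⟨hxy, by rw [hthy, hq3, one_smul], hrest⟩
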